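/- Let η > 0, δ, α ∈ ℝ, λ ≠ 0, and let K(u,v,w) = (2δ + αη)u + λu² be the first-order (ε = 0) reduced normal form. Then a point p = (u,v,w) ∈ P^η with 0 < u < η is an equilibrium of the reduced vector field X_K = ∇K × ∇S^η if and only if u = u₀ := −(2δ + αη)/(2λ). In particular, if u₀ ∈ (0,η) the set {p ∈ P^η : u = u₀} is a circle consisting entirely of equilibria, and if u₀ ∉ (0,η) there are no equilibria with 0 < u < η. -/

import Mathlib

/-- The defining function `S^η(u,v,w) = (η−u)²u⁴/2 − 2(v² + w²)` of the
twice-reduced phase space. -/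
noncomputable def Sred (η : ℝ) (p : ℝ × ℝ × ℝ) : ℝ :=
  (η - p.1) ^ 2 * p.1 ^ 4 / 2 - 2 * (p.2.1 ^ 2 + p.2.2 ^ 2)

/-- The gradient of a function on `ℝ³ = ℝ × ℝ × ℝ`, computed coordinatewise. -/
noncomputable def grad3 (f : ℝ × ℝ × ℝ → ℝ) (p : ℝ × ℝ × ℝ) : ℝ × ℝ × ℝ :=
  (deriv (fun t => f (t, p.2.1, p.2.2)) p.1,
   deriv (fun t => f (p.1, t, p.2.2)) p.2.1,
   deriv (fun t => f (p.1, p.2.1, t)) p.2.2)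

/-- The cross product on `ℝ³ = ℝ × ℝ × ℝ`. -/
def cross3 (a b : ℝ × ℝ × ℝ) : ℝ × ℝ × ℝ :=
  (a.2.1 * b.2.2 - a.2.2 * b.2.1,
   a.2.2 * b.1 - a.1 * b.2.2,
   a.1 * b.2.1 - a.2.1 * b.1)

/-!
When `K` depends on `u` alone, `∇K` points along the axis of the surface of revolution `S^η = 0`,
so `X_K` is the infinitesimal rotation about that axis with speed `4 K'(u)`. It vanishes at the
critical points of `K` and on the axis, which the surface meets only where `u = 0` or `u = η`.
-/

/-- The reduced vector field `X_K = ∇K × ∇S^η` of a Hamiltonian `K`, defined on all of `ℝ³` rather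
than only on `P^η`. -/
noncomputable def reducedField (η : ℝ) (K : ℝ × ℝ × ℝ → ℝ) (p : ℝ × ℝ × ℝ) : ℝ × ℝ × ℝ :=
  cross3 (grad3 K p) (grad3 (Sred η) p)

theorem cross3_mk_zero_zero (a : ℝ) (b : ℝ × ℝ × ℝ) :
    cross3 (a, 0, 0) b = (0, -(a * b.2.2), a * b.2.1) := by
  simp [cross3]

theorem grad3_comp_fst (k : ℝ → ℝ) (p : ℝ × ℝ × ℝ) :
    grad3 (fun q => k q.1) p = (deriv k p.1, 0, 0) := by
  simp [grad3]

theorem grad3_Sred_snd (η : ℝ) (p : ℝ × ℝ × ℝ) :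
    (grad3 (Sred η) p).2 = (-4 * p.2.1, -4 * p.2.2) := by
  simp only [grad3, Sred, deriv_const_sub', deriv_const_mul_field, deriv_add_const, deriv_const_add,
    deriv_pow_field]
  ext <;> ring

theorem reducedField_comp_fst (η : ℝ) (k : ℝ → ℝ) (p : ℝ × ℝ × ℝ) :
    reducedField η (fun q => k q.1) p =
      (0, 4 * deriv k p.1 * p.2.2, -(4 * deriv k p.1 * p.2.1)) := by
  rw [reducedField, grad3_comp_fst, cross3_mk_zero_zero, grad3_Sred_snd]
  ext <;> ring

theorem reducedField_comp_fst_eq_zero_iff (η : ℝ) (k : ℝ → ℝ) (p : ℝ × ℝ × ℝ) :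
    reducedField η (fun q => k q.1) p = 0 ↔ deriv k p.1 = 0 ∨ p.2 = 0 := by
  simp [reducedField_comp_fst, Prod.ext_iff, ← or_and_left, and_comm]

theorem Sred_eq_zero_iff (η : ℝ) (p : ℝ × ℝ × ℝ) :
    Sred η p = 0 ↔ p.2.1 ^ 2 + p.2.2 ^ 2 = ((η - p.1) * p.1 ^ 2 / 2) ^ 2 := by
  rw [Sred]
  constructor <;> intro h <;> linarith

theorem snd_ne_zero_of_Sred_eq_zero {η : ℝ} {p : ℝ × ℝ × ℝ} (hS : Sred η p = 0)
    (h0 : p.1 ≠ 0) (hu : p.1 ≠ η) : p.2 ≠ 0 := by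
  intro haxis
  have hradius : (η - p.1) * p.1 ^ 2 / 2 = 0 := by
    simpa [haxis] using ((Sred_eq_zero_iff η p).1 hS).symm
  simp [sub_eq_zero, h0, hu.symm] at hradius

theorem reducedField_comp_fst_eq_zero_iff_deriv_eq_zero {η : ℝ} (k : ℝ → ℝ) {p : ℝ × ℝ × ℝ}
    (hS : Sred η p = 0) (h0 : p.1 ≠ 0) (hu : p.1 ≠ η) :
    reducedField η (fun q => k q.1) p = 0 ↔ deriv k p.1 = 0 := by
  simp [reducedField_comp_fst_eq_zero_iff, snd_ne_zero_of_Sred_eq_zero hS h0 hu]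

section Quadratic

variable {𝕜 : Type*} [NontriviallyNormedField 𝕜]

theorem deriv_mul_add_mul_sq (a b u : 𝕜) :
    deriv (fun t => a * t + b * t ^ 2) u = a + 2 * b * u := by
  have h := ((hasDerivAt_id' u).const_mul a).fun_add ((hasDerivAt_pow 2 u).const_mul b)
  rw [h.deriv]
  ring

theorem deriv_mul_add_mul_sq_eq_zero_iff (a : 𝕜) {b : 𝕜} (hb : 2 * b ≠ 0) (u : 𝕜) :
    deriv (fun t => a * t + b * t ^ 2) u = 0 ↔ u = -a / (2 * b) := by
  rw [deriv_mul_add_mul_sq, eq_div_iff hb, eq_neg_iff_add_eq_zero, add_comm, mul_comm u]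

end Quadratic

/-- For the first-order reduced normal form `K = (2δ + αη)u + λu²`, a point of
`P^η` with `0 < u < η` is an equilibrium of `X_K = ∇K × ∇S^η` iff
`u = u₀ = −(2δ + αη)/(2λ)`; in particular, if `u₀ ∈ (0,η)` the circle
`{u = u₀}` on `P^η` consists of equilibria, and if `u₀ ∉ (0,η)` there are no
equilibria with `0 < u < η`. -/
theorem circle_of_equilibria (η δ α l : ℝ) (hη : 0 < η) (hl : l ≠ 0) :
    (∀ p : ℝ × ℝ × ℝ, Sred η p = 0 → 0 < p.1 → p.1 < η →
      (cross3 (grad3 (fun q => (2 * δ + α * η) * q.1 + l * q.1 ^ 2) p)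
          (grad3 (Sred η) p) = 0
        ↔ p.1 = -(2 * δ + α * η) / (2 * l))) ∧
    (-(2 * δ + α * η) / (2 * l) ∈ Set.Ioo 0 η →
      ∀ p : ℝ × ℝ × ℝ, Sred η p = 0 → 0 ≤ p.1 → p.1 ≤ η →
        p.1 = -(2 * δ + α * η) / (2 * l) →
        cross3 (grad3 (fun q => (2 * δ + α * η) * q.1 + l * q.1 ^ 2) p)
          (grad3 (Sred η) p) = 0) ∧
    (-(2 * δ + α * η) / (2 * l) ∉ Set.Ioo 0 η →
      ∀ p : ℝ × ℝ × ℝ, Sred η p = 0 → 0 < p.1 → p.1 < η →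
        cross3 (grad3 (fun q => (2 * δ + α * η) * q.1 + l * q.1 ^ 2) p)
          (grad3 (Sred η) p) ≠ 0) := by
  let k : ℝ → ℝ := fun u => (2 * δ + α * η) * u + l * u ^ 2
  have critical_iff (u : ℝ) : deriv k u = 0 ↔ u = -(2 * δ + α * η) / (2 * l) :=
    deriv_mul_add_mul_sq_eq_zero_iff _ (mul_ne_zero two_ne_zero hl) u
  have equilibrium_iff (p : ℝ × ℝ × ℝ) (hS : Sred η p = 0) (h0 : 0 < p.1) (h1 : p.1 < η) :
      reducedField η (fun q => k q.1) p = 0 ↔ p.1 = -(2 * δ + α * η) / (2 * l) :=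
    (reducedField_comp_fst_eq_zero_iff_deriv_eq_zero k hS h0.ne' h1.ne).trans (critical_iff p.1)
  refine ⟨equilibrium_iff, fun _ p _ _ _ hu => ?_, fun hu p hS h0 h1 hX => hu ?_⟩
  · exact (reducedField_comp_fst_eq_zero_iff η k p).2 (.inl ((critical_iff p.1).2 hu))
  · exact (equilibrium_iff p hS h0 h1).1 hX ▸ ⟨h0, h1⟩
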